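/- For any Boolean function g : {0,1}^n → {0,1}, the average sensitivity satisfies s̄_g ≥ H(p_g)/n, where p_g is the fraction of inputs at which g equals 1 and H is the binary entropy function. -/

import Mathlib

/-- Flip the i-th bit of a Boolean string. -/
def flipBit {n : ℕ} (x : Fin n → Bool) (i : Fin n) : Fin n → Bool :=
  Function.update x i (!(x i))

/-- Binary entropy function. -/
noncomputable def binEnt (p : ℝ) : ℝ :=
  p * Real.logb 2 (1 / p) + (1 - p) * Real.logb 2 (1 / (1 - p))

/-!
The pairs `(x, i)` for which flipping the `i`-th bit of `x` changes `g` split into the edge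
boundaries of the fibres of `g`, so the bound is the sum over all values of `g` of the
edge-isoperimetric inequality `μ(A) log₂ (1 / μ(A)) ≤ |∂A| / 2^n`, where `μ(A) = |A| / 2^n`. That
inequality goes by induction on `n`: if the two halves of `A` along the first coordinate have
densities `a` and `b`, at least `|a - b| 2^(n - 1)` edges in the first direction leave `A`, and
this pays for the concavity defect of `x ↦ -x log x` at the midpoint of `a` and `b`.
-/

open Finset Real

section Entropy

theorem one_sub_abs_mul_log_two_le_binEntropy {t : ℝ} (ht₀ : 0 ≤ t) (ht₁ : t ≤ 1) :
    (1 - |1 - 2 * t|) * log 2 ≤ binEntropy t := by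
  wlog ht : t ≤ 1 / 2 generalizing t
  · have h := this (t := 1 - t) (by linarith) (by linarith) (by linarith)
    rwa [binEntropy_one_sub, show 1 - 2 * (1 - t) = -(1 - 2 * t) by ring, abs_neg] at h
  -- `t` lies on the chord between `0` and `1 / 2`, where the entropy is `0` and `log 2`.
  have chord := strictConcave_binEntropy.concaveOn.2
    (show (0 : ℝ) ∈ Set.Icc 0 1 by simp) (show (2⁻¹ : ℝ) ∈ Set.Icc 0 1 by norm_num)
    (show 0 ≤ 1 - 2 * t by linarith) (show 0 ≤ 2 * t by linarith) (by ring)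
  rw [abs_of_nonneg (by linarith)]
  simpa [mul_comm 2 t] using chord

theorem negMulLog_mul_add_negMulLog_mul_one_sub (s t : ℝ) :
    negMulLog (s * t) + negMulLog (s * (1 - t)) = negMulLog s + s * binEntropy t := by
  rw [negMulLog_mul, negMulLog_mul, binEntropy_eq_negMulLog_add_negMulLog_one_sub]
  ring

theorem negMulLog_div_two (s : ℝ) : negMulLog (s / 2) = negMulLog s / 2 + s / 2 * log 2 := by
  rw [div_eq_mul_inv, negMulLog_mul, negMulLog, negMulLog, log_inv]
  ring

theorem negMulLog_midpoint_le {a b : ℝ} (ha : 0 ≤ a) (hb : 0 ≤ b) :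
    negMulLog ((a + b) / 2) ≤ (negMulLog a + negMulLog b) / 2 + |a - b| / 2 * log 2 := by
  obtain ⟨s, t, hs, ht₀, ht₁, rfl, rfl⟩ :
      ∃ s t : ℝ, 0 ≤ s ∧ 0 ≤ t ∧ t ≤ 1 ∧ a = s * t ∧ b = s * (1 - t) := by
    rcases (add_nonneg ha hb).eq_or_lt' with h | h
    · exact ⟨0, 0, le_rfl, le_rfl, zero_le_one, by linarith, by linarith⟩
    · exact ⟨a + b, a / (a + b), h.le, by positivity, div_le_one_of_le₀ (by linarith) h.le,
        by field_simp, by field_simp; ring⟩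
  have habs : |s * t - s * (1 - t)| = s * |1 - 2 * t| := by
    rw [← mul_sub, abs_mul, abs_of_nonneg hs, abs_sub_comm]
    ring_nf
  have hent := mul_le_mul_of_nonneg_left (one_sub_abs_mul_log_two_le_binEntropy ht₀ ht₁) hs
  rw [negMulLog_mul_add_negMulLog_mul_one_sub, habs, ← mul_add, add_sub_cancel, mul_one,
    negMulLog_div_two]
  linarith

theorem binEnt_eq_binEntropy_div_log_two (p : ℝ) : binEnt p = binEntropy p / log 2 := by
  simp only [binEnt, binEntropy, logb, one_div]
  ring

/-- The Shannon entropy, in bits, of the random variable `f x` for `x` uniform on the finite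
type `X`. It generalizes `binEnt` from two-valued to finite-valued variables. -/
noncomputable def uniformEntropy {X α : Type*} [Fintype X] [Fintype α] [DecidableEq α]
    (f : X → α) : ℝ :=
  (∑ a, negMulLog (#{x | f x = a} / Fintype.card X)) / log 2

theorem uniformEntropy_bool {X : Type*} [Fintype X] [Nonempty X] (f : X → Bool) :
    uniformEntropy f = binEnt (#{x | f x = true} / Fintype.card X) := by
  have hfalse : (#{x | f x = false} : ℝ) / Fintype.card X
      = 1 - #{x | f x = true} / Fintype.card X := by
    have hcard := card_filter_add_card_filter_not (s := univ) (f · = true)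
    rw [eq_sub_iff_add_eq', ← add_div, div_eq_one_iff_eq (by simp)]
    simpa using congrArg (Nat.cast (R := ℝ)) hcard
  rw [uniformEntropy, Fintype.sum_bool, hfalse, binEnt_eq_binEntropy_div_log_two,
    binEntropy_eq_negMulLog_add_negMulLog_one_sub]

end Entropy

section Cube

variable {n : ℕ}

theorem flipBit_cons_zero (b : Bool) (y : Fin n → Bool) :
    flipBit (Fin.cons b y : Fin (n + 1) → Bool) 0 = Fin.cons (!b) y := by
  simp [flipBit]

theorem flipBit_cons_succ (b : Bool) (y : Fin n → Bool) (i : Fin n) :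
    flipBit (Fin.cons b y : Fin (n + 1) → Bool) i.succ = Fin.cons b (flipBit y i) := by
  simp [flipBit, Fin.cons_update]

theorem card_filter_fin_cons {α : Type*} [Fintype α] (P : (Fin (n + 1) → α) → Prop)
    [DecidablePred P] : #{x | P x} = ∑ a, #{y : Fin n → α | P (Fin.cons a y)} := by
  simp only [card_filter]
  rw [← (Fin.consEquiv fun _ ↦ α).sum_comp, Fintype.sum_prod_type]
  rfl

/-- The half of `A` in which the first coordinate is `b`, as a subset of the cube of one dimension
less. -/
def cubeSlice (A : Finset (Fin (n + 1) → Bool)) (b : Bool) : Finset (Fin n → Bool) :=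
  {y | Fin.cons b y ∈ A}

theorem mem_cubeSlice {A : Finset (Fin (n + 1) → Bool)} {b : Bool} {y : Fin n → Bool} :
    y ∈ cubeSlice A b ↔ Fin.cons b y ∈ A :=
  mem_filter_univ _

theorem card_eq_card_cubeSlice_add_card_cubeSlice (A : Finset (Fin (n + 1) → Bool)) :
    #A = #(cubeSlice A true) + #(cubeSlice A false) := by
  simpa [cubeSlice] using card_filter_fin_cons (· ∈ A)

/-- The edge boundary of `A` in the cube. The edge between `x ∈ A` and `flipBit x i ∉ A` is
recorded as the pair `(x, i)`, its endpoint in `A` together with its direction. -/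
def edgeBoundary (A : Finset (Fin n → Bool)) : Finset ((Fin n → Bool) × Fin n) :=
  {p | p.1 ∈ A ∧ flipBit p.1 p.2 ∉ A}

theorem card_edgeBoundary (A : Finset (Fin n → Bool)) :
    #(edgeBoundary A) = ∑ i, #{x | x ∈ A ∧ flipBit x i ∉ A} := by
  simp only [edgeBoundary, card_filter]
  exact Fintype.sum_prod_type_right _

theorem card_edgeBoundary_succ (A : Finset (Fin (n + 1) → Bool)) :
    #(edgeBoundary A) = #(edgeBoundary (cubeSlice A true)) + #(edgeBoundary (cubeSlice A false))
      + (#(cubeSlice A true \ cubeSlice A false) + #(cubeSlice A false \ cubeSlice A true)) := by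
  have hsdiff (b c : Bool) : cubeSlice A b \ cubeSlice A c
      = ({y | Fin.cons b y ∈ A ∧ Fin.cons c y ∉ A} : Finset (Fin n → Bool)) := by
    ext; simp [mem_cubeSlice]
  simp only [card_edgeBoundary, hsdiff, Fin.sum_univ_succ, card_filter_fin_cons,
    Fintype.sum_bool, flipBit_cons_zero, flipBit_cons_succ, sum_add_distrib, mem_cubeSlice,
    Bool.not_true, Bool.not_false]
  ring

theorem abs_card_sub_card_le_card_sdiff_add_card_sdiff {α : Type*} [DecidableEq α]
    (s t : Finset α) :
    |(#s : ℝ) - #t| ≤ #(s \ t) + #(t \ s) := by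
  have hst : (#s : ℝ) ≤ #(s \ t) + #t := mod_cast card_le_card_sdiff_add_card
  have hts : (#t : ℝ) ≤ #(t \ s) + #s := mod_cast card_le_card_sdiff_add_card
  rw [abs_le]
  constructor <;> linarith [Nat.cast_nonneg (α := ℝ) #(s \ t), Nat.cast_nonneg (α := ℝ) #(t \ s)]

theorem negMulLog_card_div_le_card_edgeBoundary (A : Finset (Fin n → Bool)) :
    negMulLog (#A / 2 ^ n) ≤ #(edgeBoundary A) / 2 ^ n * log 2 := by
  induction n with
  | zero =>
    have hA : #A ≤ 1 := by simpa using card_le_univ A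
    rcases Nat.le_one_iff_eq_zero_or_eq_one.1 hA with h | h <;> simp [h, card_edgeBoundary]
  | succ n ih =>
    set A₁ := cubeSlice A true
    set A₀ := cubeSlice A false
    set a : ℝ := #A₁ / 2 ^ n with ha
    set b : ℝ := #A₀ / 2 ^ n with hb
    set d : ℝ := #(A₁ \ A₀) + #(A₀ \ A₁)
    have hdensity : (#A : ℝ) / 2 ^ (n + 1) = (a + b) / 2 := by
      rw [card_eq_card_cubeSlice_add_card_cubeSlice, pow_succ]
      push_cast
      ring
    have hboundary : (#(edgeBoundary A) : ℝ) / 2 ^ (n + 1)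
        = (#(edgeBoundary A₁) / 2 ^ n + #(edgeBoundary A₀) / 2 ^ n) / 2 + d / 2 ^ n / 2 := by
      rw [card_edgeBoundary_succ, pow_succ]
      push_cast
      ring
    have hdiff : |a - b| ≤ d / 2 ^ n := by
      rw [ha, hb, ← sub_div, abs_div, abs_of_pos (by positivity : (0 : ℝ) < 2 ^ n)]
      gcongr
      exact abs_card_sub_card_le_card_sdiff_add_card_sdiff _ _
    calc negMulLog (#A / 2 ^ (n + 1))
        ≤ (negMulLog a + negMulLog b) / 2 + |a - b| / 2 * log 2 := by
          rw [hdensity]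
          exact negMulLog_midpoint_le (by positivity) (by positivity)
      _ ≤ (#(edgeBoundary A₁) / 2 ^ n * log 2 + #(edgeBoundary A₀) / 2 ^ n * log 2) / 2
            + d / 2 ^ n / 2 * log 2 := by
          gcongr <;> apply ih
      _ = #(edgeBoundary A) / 2 ^ (n + 1) * log 2 := by
          rw [hboundary]
          ring

theorem card_filter_ne_flipBit_eq_sum_card_edgeBoundary {α : Type*} [Fintype α] [DecidableEq α]
    (g : (Fin n → Bool) → α) :
    #{p : (Fin n → Bool) × Fin n | g p.1 ≠ g (flipBit p.1 p.2)}
      = ∑ a, #(edgeBoundary {x | g x = a}) := by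
  rw [card_eq_sum_card_fiberwise (f := fun p ↦ g p.1) (t := univ) (by simp)]
  refine sum_congr rfl fun a _ ↦ congrArg card ?_
  ext p
  simp only [edgeBoundary, mem_filter]
  grind

theorem uniformEntropy_le_card_filter_ne_flipBit {α : Type*} [Fintype α] [DecidableEq α]
    (g : (Fin n → Bool) → α) :
    uniformEntropy g
      ≤ #{p : (Fin n → Bool) × Fin n | g p.1 ≠ g (flipBit p.1 p.2)} / 2 ^ n := by
  rw [uniformEntropy, div_le_iff₀ (log_pos one_lt_two),
    card_filter_ne_flipBit_eq_sum_card_edgeBoundary, Nat.cast_sum, sum_div, sum_mul]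
  refine sum_le_sum fun a _ ↦ ?_
  simpa using negMulLog_card_div_le_card_edgeBoundary {x | g x = a}

end Cube

theorem avg_sensitivity_ge_entropy_general {α : Type*} [Fintype α] [DecidableEq α] {n : ℕ}
    (hn : 0 < n) (g : (Fin n → Bool) → α) :
    (#{p : (Fin n → Bool) × Fin n | g p.1 ≠ g (flipBit p.1 p.2)} : ℝ) / (2 ^ n * n)
      ≥ uniformEntropy g / n := by
  rw [ge_iff_le, ← div_div, div_le_div_iff_of_pos_right (Nat.cast_pos.2 hn)]
  exact uniformEntropy_le_card_filter_ne_flipBit g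

/-- For any Boolean function `g : {0,1}^n → {0,1}`, the average sensitivity
satisfies `s̄_g ≥ H(p_g)/n`. -/
theorem avg_sensitivity_ge_entropy {n : ℕ} (hn : 0 < n)
    (g : (Fin n → Bool) → Bool) :
    (((Finset.univ : Finset ((Fin n → Bool) × Fin n)).filter
        (fun p => g p.1 ≠ g (flipBit p.1 p.2))).card : ℝ) / (2 ^ n * n)
      ≥ binEnt (((Finset.univ.filter (fun x => g x = true)).card : ℝ) / 2 ^ n) / n := by
  simpa [uniformEntropy_bool] using avg_sensitivity_ge_entropy_general hn g
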